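/- Let ξ, η, σ ∈ ℂ with Im(ξ²) < 0, Im(η²) < 0, and |Re σ| < 1/4. Then H₀⁽²⁾((ξ² + η²)/2) = (2^{1/2}/π²) ∫_{σ−i∞}^{σ+i∞} Γ(1/4 − s) Γ(1/4 + s) D_{2s−1/2}((1+i)ξ) D_{−2s−1/2}((1+i)η) ds. (Note that ((1+i)ξ)²/2 = iξ² has positive real part and Im((ξ²+η²)/2) < 0, so all functions appearing are in the domains of the stated representations.) -/

import Mathlib

/-- Confluent hypergeometric function of the second kind via its Laplace-transform
representation, valid for `Re a > 0`, `Re z > 0` (principal branch powers). -/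
noncomputable def hypU (a b z : ℂ) : ℂ :=
  (Complex.Gamma a)⁻¹ *
    ∫ t in Set.Ioi (0 : ℝ), Complex.exp (-z * t) * (t : ℂ) ^ (a - 1) * ((1 : ℂ) + t) ^ (b - a - 1)

/-- Parabolic cylinder function `D_ν(z) = 2^{ν/2} e^{-z²/4} U(-ν/2, 1/2, z²/2)`,
valid for `Re ν < 0`, `Re(z²) > 0` (principal branch powers). -/
noncomputable def parD (ν z : ℂ) : ℂ :=
  (2 : ℂ) ^ (ν / 2) * Complex.exp (-z ^ 2 / 4) * hypU (-ν / 2) (1 / 2) (z ^ 2 / 2)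

/-- Order-zero Hankel function of the second kind,
`H₀⁽²⁾(ζ) = (2i/√π) e^{-iζ} U(1/2, 1, 2iζ)`, valid for `Im ζ < 0`. -/
noncomputable def hankelH02 (ζ : ℂ) : ℂ :=
  2 * Complex.I / (Real.sqrt Real.pi : ℂ) * Complex.exp (-Complex.I * ζ) *
    hypU (1 / 2) 1 (2 * Complex.I * ζ)


namespace HankelAdd
open MeasureTheory Set Filter Topology FourierTransform

noncomputable def T (x : ℝ) : ℝ := (Real.exp x - 1)⁻¹

lemma exp_sub_pos {x : ℝ} (hx : 0 < x) : 0 < Real.exp x - 1 := by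
  have := Real.add_one_lt_exp hx.ne'; linarith

lemma T_pos {x : ℝ} (hx : 0 < x) : 0 < T x := inv_pos.2 (exp_sub_pos hx)

lemma one_add_T {x : ℝ} (hx : 0 < x) : 1 + T x = Real.exp x * T x := by
  have := (exp_sub_pos hx).ne'
  unfold T; field_simp; ring

lemma inv_le_one_add_T {x : ℝ} (hx : 0 < x) : x⁻¹ ≤ 1 + T x := by
  have h1 := exp_sub_pos hx
  have h2 : 1 + T x = (1 - Real.exp (-x))⁻¹ := by
    rw [one_add_T hx, T, Real.exp_neg]
    have := Real.exp_pos x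
    have h3 : 1 - (Real.exp x)⁻¹ = (Real.exp x - 1) * (Real.exp x)⁻¹ := by
      field_simp
    rw [h3, mul_inv, inv_inv, mul_comm]
  rw [h2]
  have h4 : 0 < 1 - Real.exp (-x) := by
    have : Real.exp (-x) < 1 := by rw [Real.exp_lt_one_iff]; linarith
    linarith
  apply inv_anti₀ h4
  have := Real.add_one_le_exp (-x)
  linarith

lemma log_T {x : ℝ} (hx : 0 < x) : Real.log (T x) = Real.log (1 + T x) - x := by
  rw [one_add_T hx, Real.log_mul (Real.exp_pos x).ne' (T_pos hx).ne', Real.log_exp]; ring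

lemma hasDerivAt_T {x : ℝ} (hx : 0 < x) : HasDerivAt T (-(T x * (1 + T x))) x := by
  have h := ((Real.hasDerivAt_exp x).sub_const 1).inv (exp_sub_pos hx).ne'
  refine h.congr_deriv ?_
  rw [one_add_T hx, T]
  have := (exp_sub_pos hx).ne'
  field_simp

lemma T_inj : InjOn T (Ioi 0) := by
  intro x hx y hy h
  have h' := inv_injective h
  exact Real.exp_injective (by linarith)

lemma T_image : T '' Ioi 0 = Ioi 0 := by
  ext t
  constructor
  · rintro ⟨x, hx, rfl⟩
    exact T_pos hx
  · intro ht
    have ht' : (0:ℝ) < t := ht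
    have h1 : 0 < t⁻¹ := inv_pos.2 ht'
    refine ⟨Real.log (1 + t⁻¹), Real.log_pos (by linarith), ?_⟩
    rw [T, Real.exp_log (by linarith)]; simp

/-- The substitution `t = 1 / (e^x - 1)` in the Laplace integral. -/
lemma laplace_subst (a b w : ℂ) :
    ∫ t in Ioi (0 : ℝ), Complex.exp (-w * t) * (t : ℂ) ^ (a - 1) * ((1 : ℂ) + t) ^ (b - a - 1)
    = ∫ x in Ioi (0 : ℝ), Complex.exp (-w * T x + b * (Real.log (1 + T x) : ℝ) - a * x) := by
  conv_lhs => rw [← T_image]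
  rw [integral_image_eq_integral_abs_deriv_smul measurableSet_Ioi
    (fun x hx => (hasDerivAt_T hx).hasDerivWithinAt) T_inj]
  refine setIntegral_congr_fun measurableSet_Ioi fun x hx => ?_
  have hx : (0:ℝ) < x := hx
  have hT := T_pos hx
  have hT1 : 0 < 1 + T x := by linarith
  have h1 : ((T x : ℝ) : ℂ) ≠ 0 := by exact_mod_cast hT.ne'
  have h2 : ((1 : ℂ) + (T x : ℝ)) ≠ 0 := by exact_mod_cast hT1.ne'
  have e1 : |-(T x * (1 + T x))| = Real.exp (Real.log (T x) + Real.log (1 + T x)) := by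
    rw [abs_neg, abs_of_pos (mul_pos hT hT1), Real.exp_add, Real.exp_log hT, Real.exp_log hT1]
  have e2 : (1 : ℂ) + (T x : ℝ) = ((1 + T x : ℝ) : ℂ) := by push_cast; rfl
  simp only [e1]
  rw [Complex.cpow_def_of_ne_zero h1, Complex.cpow_def_of_ne_zero h2, e2,
    ← Complex.ofReal_log hT.le, ← Complex.ofReal_log hT1.le, Complex.real_smul,
    Complex.ofReal_exp, ← Complex.exp_add, ← Complex.exp_add, ← Complex.exp_add, log_T hx]
  congr 1
  push_cast
  ring

open Polynomial in
lemma poly_bound {a : ℝ} (ha : 0 < a) (P : ℂ[X]) :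
    ∃ C : ℝ, 0 ≤ C ∧ ∀ t : ℝ, 0 ≤ t → ‖P.eval (t : ℂ)‖ * Real.exp (-a * t) ≤ C := by
  induction P using Polynomial.induction_on' with
  | add p q hp hq =>
    obtain ⟨C, hC, h⟩ := hp
    obtain ⟨D, hD, h'⟩ := hq
    refine ⟨C + D, by positivity, fun t ht => ?_⟩
    rw [eval_add]
    calc _ ≤ (‖p.eval (t:ℂ)‖ + ‖q.eval (t:ℂ)‖) * Real.exp (-a * t) := by
          gcongr; exact norm_add_le _ _
      _ ≤ _ := by rw [add_mul]; exact add_le_add (h t ht) (h' t ht)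
  | monomial n c =>
    refine ⟨‖c‖ * (n.factorial / a ^ n), by positivity, fun t ht => ?_⟩
    rw [eval_monomial, norm_mul, norm_pow, Complex.norm_real, Real.norm_of_nonneg ht, mul_assoc]
    gcongr
    have h := Real.pow_div_factorial_le_exp (a * t) (by positivity) n
    rw [neg_mul, Real.exp_neg, ← div_eq_mul_inv, div_le_div_iff₀ (Real.exp_pos _) (by positivity)]
    rw [div_le_iff₀ (by positivity), mul_pow] at h
    linarith

open Polynomial in
noncomputable def K (w c : ℂ) (P : ℂ[X]) (x : ℝ) : ℂ :=
  if 0 < x then P.eval ((T x : ℝ) : ℂ) *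
    Complex.exp (-w * T x + (1 / 2 : ℂ) * (Real.log (1 + T x) : ℝ) + c * x) else 0

open Polynomial

lemma K_of_nonpos (w c : ℂ) (P : ℂ[X]) {x : ℝ} (hx : x ≤ 0) : K w c P x = 0 :=
  if_neg (not_lt.2 hx)

lemma K_bound {w c : ℂ} (hw : 0 < w.re) (P : ℂ[X]) :
    ∃ C : ℝ, 0 ≤ C ∧ ∀ x : ℝ, 0 < x → ‖K w c P x‖ ≤ C * Real.exp (c.re * x) := by
  obtain ⟨C, hC, h⟩ := poly_bound hw (P * (1 + X))
  refine ⟨C, hC, fun x hx => ?_⟩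
  have hT := T_pos hx
  have hT1 : 0 < 1 + T x := by linarith
  have hh := h (T x) hT.le
  rw [K, if_pos hx, norm_mul, Complex.norm_exp]
  have e : (-w * T x + (1 / 2 : ℂ) * (Real.log (1 + T x) : ℝ) + c * x).re
      = -w.re * T x + 1/2 * Real.log (1 + T x) + c.re * x := by
    simp only [Complex.add_re, Complex.re_mul_ofReal, Complex.neg_re]
    norm_num
  rw [e, Real.exp_add, Real.exp_add, ← mul_assoc]
  gcongr
  refine le_trans ?_ hh
  rw [eval_mul, norm_mul]
  have e3 : ‖((1 + X : ℂ[X]).eval ((T x : ℝ) : ℂ))‖ = 1 + T x := by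
    simp only [eval_add, eval_one, eval_X]
    rw [show (1 : ℂ) + (T x : ℝ) = ((1 + T x : ℝ) : ℂ) by push_cast; rfl, Complex.norm_real,
      Real.norm_of_nonneg hT1.le]
  rw [e3]
  have h5 : Real.exp (1/2 * Real.log (1 + T x)) ≤ 1 + T x := by
    conv_rhs => rw [← Real.exp_log hT1]
    apply Real.exp_le_exp.2
    have := Real.log_nonneg (by linarith : 1 ≤ 1 + T x)
    linarith
  calc _ ≤ ‖P.eval ((T x : ℝ) : ℂ)‖ * (Real.exp (-w.re * T x) * (1 + T x)) := by
        gcongr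
    _ = _ := by ring

noncomputable def dP (w c : ℂ) (P : ℂ[X]) : ℂ[X] :=
  - derivative P * (X * (1 + X)) + P * (C w * (X * (1 + X)) - C (1/2) * X + C c)

lemma K_deriv {w c : ℂ} (hw : 0 < w.re) (hc : c.re < 0) (P : ℂ[X]) (x : ℝ) :
    HasDerivAt (K w c P) (K w c (dP w c P) x) x := by
  rcases lt_trichotomy x 0 with hx | rfl | hx
  · rw [K_of_nonpos _ _ _ hx.le]
    refine (hasDerivAt_const x (0:ℂ)).congr_of_eventuallyEq ?_
    filter_upwards [Iio_mem_nhds hx] with y hy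
    exact K_of_nonpos _ _ _ (le_of_lt hy)
  · rw [K_of_nonpos _ _ _ le_rfl]
    obtain ⟨D, hD, h⟩ := K_bound (c := c) hw (P * (1 + X) ^ 2)
    have key : ∀ y : ℝ, ‖K w c P y‖ ≤ D * ‖y ^ 2‖ := by
      intro y
      rcases le_or_gt y 0 with hy | hy
      · rw [K_of_nonpos _ _ _ hy]; simp; positivity
      have h1 := h y hy
      have e : K w c (P * (1 + X) ^ 2) y = K w c P y * (((1 + T y) ^ 2 : ℝ) : ℂ) := by
        rw [K, K, if_pos hy, if_pos hy]
        simp only [eval_mul, eval_pow, eval_add, eval_one, eval_X]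
        push_cast; ring
      rw [e, norm_mul, Complex.norm_real, Real.norm_of_nonneg (by positivity)] at h1
      have h2 : Real.exp (c.re * y) ≤ 1 := by
        rw [Real.exp_le_one_iff]; nlinarith
      have h3 := inv_le_one_add_T hy
      have h4 : (y⁻¹) ^ 2 ≤ (1 + T y) ^ 2 := by gcongr
      have h5 : ‖K w c P y‖ * (y⁻¹) ^ 2 ≤ D := by
        calc _ ≤ ‖K w c P y‖ * (1 + T y) ^ 2 := by gcongr
          _ ≤ _ := h1
          _ ≤ D * 1 := by gcongr
          _ = D := mul_one D
      rw [Real.norm_of_nonneg (by positivity)]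
      rw [inv_pow, ← div_eq_mul_inv, div_le_iff₀ (by positivity)] at h5
      exact h5
    rw [hasDerivAt_iff_isLittleO_nhds_zero]
    have hO : (fun y : ℝ => K w c P y) =O[𝓝 0] (fun y : ℝ => y ^ 2) :=
      Asymptotics.IsBigO.of_bound D (Eventually.of_forall key)
    have ho : (fun y : ℝ => y ^ 2) =o[𝓝 0] (fun y : ℝ => y) := by
      simpa using Asymptotics.isLittleO_pow_pow (𝕜 := ℝ) (m := 1) (n := 2) (by norm_num)
    simpa [K_of_nonpos w c P le_rfl] using hO.trans_isLittleO ho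
  · have hT := T_pos hx
    have hT1 : 0 < 1 + T x := by linarith
    have hTd := hasDerivAt_T hx
    have hTc := hTd.ofReal_comp
    have hl := ((hTd.const_add 1).log hT1.ne').ofReal_comp
    have hid : HasDerivAt (fun y : ℝ => (y : ℂ)) 1 x := by
      simpa using (hasDerivAt_id x).ofReal_comp
    have hP := HasDerivAt.comp x (P.hasDerivAt ((T x : ℝ) : ℂ)) hTc
    have hE := (((hTc.const_mul (-w)).add (hl.const_mul (1/2 : ℂ))).add (hid.const_mul c)).cexp
    refine ((hP.mul hE).congr_of_eventuallyEq ?_).congr_deriv ?_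
    · filter_upwards [Ioi_mem_nhds hx] with y hy
      rw [K, if_pos (show 0 < y from hy)]
      rfl
    · rw [K, if_pos hx, dP]
      have h2 : ((1 : ℂ) + (T x : ℝ)) ≠ 0 := by exact_mod_cast hT1.ne'
      simp only [eval_add, eval_mul, eval_sub, eval_neg, eval_C, eval_X, eval_one]
      have : ((-(T x * (1 + T x)) / (1 + T x) : ℝ) : ℂ) = -(T x : ℝ) := by
        rw [neg_div, mul_div_assoc, div_self hT1.ne', mul_one]; push_cast; rfl
      simp only [Pi.add_apply, Function.comp_apply]
      rw [this]
      push_cast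
      ring

lemma K_cont {w c : ℂ} (hw : 0 < w.re) (hc : c.re < 0) (P : ℂ[X]) : Continuous (K w c P) :=
  continuous_iff_continuousAt.2 fun x => (K_deriv hw hc P x).continuousAt

lemma K_integrable {w c : ℂ} (hw : 0 < w.re) (hc : c.re < 0) (P : ℂ[X]) :
    Integrable (K w c P) := by
  obtain ⟨D, hD, h⟩ := K_bound (c := c) hw P
  have h1 : IntegrableOn (fun x : ℝ => D * Real.exp (c.re * x)) (Ioi 0) :=
    (integrableOn_exp_mul_Ioi hc 0).const_mul D
  have h2 := (integrable_indicator_iff measurableSet_Ioi).2 h1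
  refine h2.mono' (K_cont hw hc P).aestronglyMeasurable (Eventually.of_forall fun x => ?_)
  by_cases hx : 0 < x
  · rw [indicator_of_mem (show x ∈ Ioi (0:ℝ) from hx)]; exact h x hx
  · rw [indicator_of_notMem (show x ∉ Ioi (0:ℝ) from hx), K_of_nonpos _ _ _ (not_lt.1 hx)]; simp

lemma K_fourier_deriv {w c : ℂ} (hw : 0 < w.re) (hc : c.re < 0) (P : ℂ[X]) (k : ℝ) :
    𝓕 (K w c (dP w c P)) k = (2 * Real.pi * Complex.I * k) * 𝓕 (K w c P) k := by
  have hd : deriv (K w c P) = K w c (dP w c P) := funext fun x => (K_deriv hw hc P x).deriv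
  have := Real.fourier_deriv (K_integrable hw hc P) (fun x => (K_deriv hw hc P x).differentiableAt)
    (by rw [hd]; exact K_integrable hw hc _)
  rw [hd] at this
  rw [this]; rfl

lemma fourier_norm_le (f : ℝ → ℂ) (k : ℝ) : ‖𝓕 f k‖ ≤ ∫ x, ‖f x‖ := by
  rw [Real.fourier_eq]
  refine (norm_integral_le_integral_norm _).trans_eq ?_
  simp

lemma K_fourier_integrable {w c : ℂ} (hw : 0 < w.re) (hc : c.re < 0) (P : ℂ[X]) :
    Integrable (𝓕 (K w c P)) := by
  set M := (∫ x, ‖K w c P x‖) + ∫ x, ‖K w c (dP w c (dP w c P)) x‖ with hM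
  have hi := integrable_inv_one_add_sq.const_mul M
  refine hi.mono' ?_ (Eventually.of_forall fun k => ?_)
  · exact (VectorFourier.fourierIntegral_continuous Real.continuous_fourierChar
      (by exact continuous_inner) (K_integrable hw hc P)).aestronglyMeasurable
  · have h1 := fourier_norm_le (K w c P) k
    have h2 := fourier_norm_le (K w c (dP w c (dP w c P))) k
    rw [K_fourier_deriv hw hc, K_fourier_deriv hw hc, norm_mul] at h2
    have e : ‖(2 * Real.pi * Complex.I * k : ℂ)‖ = 2 * Real.pi * |k| := by
      simp [abs_of_pos Real.pi_pos]
    rw [e, norm_mul, e] at h2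
    rw [← div_eq_mul_inv, le_div_iff₀ (by positivity)]
    have h3 : k ^ 2 ≤ (2 * Real.pi * |k|) * (2 * Real.pi * |k|) := by
      have : 1 ≤ 2 * Real.pi := by linarith [Real.pi_gt_three]
      have h4 : |k| ≤ 2 * Real.pi * |k| := le_mul_of_one_le_left (abs_nonneg k) this
      rw [← sq_abs, sq]; gcongr
    have h5 : ‖𝓕 (K w c P) k‖ * k ^ 2 ≤ ‖𝓕 (K w c P) k‖ * ((2 * Real.pi * |k|) * (2 * Real.pi * |k|)) := by
      gcongr
    rw [hM]
    nlinarith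

/-- Parseval's identity for a nice function against an integrable one. -/
lemma parseval {f g : ℝ → ℂ} (hf : Integrable f) (hfc : Continuous f) (hff : Integrable (𝓕 f))
    (hg : Integrable g) : ∫ k, 𝓕⁻ f k * 𝓕 g k = ∫ x, f x * g x := by
  have hfi : Integrable (𝓕⁻ f) := by
    have : 𝓕⁻ f = fun k => 𝓕 f (-k) := funext fun k => Real.fourierInv_eq_fourier_neg f k
    rw [this]; exact hff.comp_neg
  have h := VectorFourier.integral_fourierIntegral_smul_eq_flip (μ := volume) (ν := volume)
    (L := innerₗ ℝ) Real.continuous_fourierChar (by exact continuous_inner) hfi hg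
  have h2 := hfc.fourier_fourierInv_eq hf hff
  have h' : ∫ k, 𝓕 (𝓕⁻ f) k * g k = ∫ k, 𝓕⁻ f k * 𝓕 g k := by
    rw [flip_innerₗ] at h
    exact h
  rw [← h', h2]

lemma K_fourierInv (w c : ℂ) (k : ℝ) :
    𝓕⁻ (K w c 1) k = ∫ x in Ioi (0 : ℝ), Complex.exp (-w * T x +
      (1 / 2 : ℂ) * (Real.log (1 + T x) : ℝ) - (-c - 2 * Real.pi * Complex.I * k) * x) := by
  rw [Real.fourierInv_eq', ← integral_indicator measurableSet_Ioi]
  congr 1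
  ext x
  by_cases hx : 0 < x
  · rw [indicator_of_mem (show x ∈ Ioi (0:ℝ) from hx), K, if_pos hx, eval_one, one_mul, smul_eq_mul,
      ← Complex.exp_add]
    congr 1
    simp
    ring
  · rw [indicator_of_notMem (show x ∉ Ioi (0:ℝ) from hx), K_of_nonpos _ _ _ (not_lt.1 hx)]; simp

lemma K_fourier (w c : ℂ) (k : ℝ) :
    𝓕 (K w c 1) k = ∫ x in Ioi (0 : ℝ), Complex.exp (-w * T x +
      (1 / 2 : ℂ) * (Real.log (1 + T x) : ℝ) - (-c + 2 * Real.pi * Complex.I * k) * x) := by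
  have := K_fourierInv w c (-k)
  rw [Real.fourierInv_eq_fourier_neg, neg_neg] at this
  rw [this]
  push_cast
  simp only [mul_neg, sub_neg_eq_add]

lemma gamma_hypU {a : ℂ} (ha : 0 < a.re) (b w : ℂ) : Complex.Gamma a * hypU a b w =
    ∫ x in Ioi (0 : ℝ), Complex.exp (-w * T x + b * (Real.log (1 + T x) : ℝ) - a * x) := by
  rw [hypU, ← mul_assoc, mul_inv_cancel₀ (Complex.Gamma_ne_zero_of_re_pos ha), one_mul,
    laplace_subst]

lemma K_prod (w v c d : ℂ) (h : c + d = -1/2) : ∫ x, K w c 1 x * K v d 1 x =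
    ∫ x in Ioi (0 : ℝ), Complex.exp (-(w + v) * T x + 1 * (Real.log (1 + T x) : ℝ)
      - (1/2 : ℂ) * x) := by
  rw [← integral_indicator measurableSet_Ioi]
  congr 1
  ext x
  by_cases hx : 0 < x
  · rw [indicator_of_mem (show x ∈ Ioi (0:ℝ) from hx), K, K, if_pos hx, if_pos hx, eval_one,
      one_mul, one_mul, ← Complex.exp_add]
    congr 1
    have : c = -1/2 - d := by rw [← h]; ring
    rw [this]
    ring
  · rw [indicator_of_notMem (show x ∉ Ioi (0:ℝ) from hx), K_of_nonpos _ _ _ (not_lt.1 hx)]; simp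

end HankelAdd

open FourierTransform

/-- Magnus' 1941 addition theorem for the order-zero Hankel function of the second kind. -/
theorem hankelH02_addition (ξ η σ : ℂ) (hξ : (ξ ^ 2).im < 0) (hη : (η ^ 2).im < 0)
    (hσ : |σ.re| < 1 / 4) :
    hankelH02 ((ξ ^ 2 + η ^ 2) / 2) =
      ((2 : ℂ) ^ ((1 : ℂ) / 2) / (Real.pi : ℂ) ^ 2) *
        (Complex.I * ∫ τ : ℝ,
          Complex.Gamma (1 / 4 - (σ + Complex.I * τ)) *
          Complex.Gamma (1 / 4 + (σ + Complex.I * τ)) *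
          parD (2 * (σ + Complex.I * τ) - 1 / 2) ((1 + Complex.I) * ξ) *
          parD (-2 * (σ + Complex.I * τ) - 1 / 2) ((1 + Complex.I) * η)) := by
  set w : ℂ := Complex.I * ξ ^ 2 with hw
  set v : ℂ := Complex.I * η ^ 2 with hv
  have hwre : 0 < w.re := by rw [hw]; simp only [Complex.I_mul_re]; linarith
  have hvre : 0 < v.re := by rw [hv]; simp only [Complex.I_mul_re]; linarith
  obtain ⟨hs1, hs2⟩ := abs_lt.1 hσ
  have hI : (1 + Complex.I) ^ 2 = 2 * Complex.I := by
    rw [add_sq, Complex.I_sq]; ring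
  have hzw : ((1 + Complex.I) * ξ) ^ 2 = 2 * w := by rw [mul_pow, hI, hw]; ring
  have hzv : ((1 + Complex.I) * η) ^ 2 = 2 * v := by rw [mul_pow, hI, hv]; ring
  set c : ℂ := σ - 1/4 with hc
  set d : ℂ := -σ - 1/4 with hd
  have hcre : c.re < 0 := by rw [hc]; norm_num; linarith
  have hdre : d.re < 0 := by rw [hd]; norm_num; linarith
  have hint : ∀ τ : ℝ, Complex.Gamma (1 / 4 - (σ + Complex.I * τ)) *
          Complex.Gamma (1 / 4 + (σ + Complex.I * τ)) *
          parD (2 * (σ + Complex.I * τ) - 1 / 2) ((1 + Complex.I) * ξ) *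
          parD (-2 * (σ + Complex.I * τ) - 1 / 2) ((1 + Complex.I) * η) =
        (2 : ℂ) ^ (-(1/2) : ℂ) * Complex.exp (-(w + v) / 2) *
          (𝓕⁻ (HankelAdd.K w c 1) (τ / (2 * Real.pi)) *
            𝓕 (HankelAdd.K v d 1) (τ / (2 * Real.pi))) := by
    intro τ
    have hpi : (Real.pi : ℂ) ≠ 0 := by exact_mod_cast Real.pi_ne_zero
    have ha : 0 < (1 / 4 - (σ + Complex.I * τ)).re := by
      simp only [Complex.sub_re, Complex.add_re, Complex.I_mul_re, Complex.ofReal_im]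
      norm_num; linarith
    have hb : 0 < (1 / 4 + (σ + Complex.I * τ)).re := by
      simp only [Complex.add_re, Complex.I_mul_re, Complex.ofReal_im]
      norm_num; linarith
    have h1 := HankelAdd.gamma_hypU ha (1/2) w
    have h2 := HankelAdd.gamma_hypU hb (1/2) v
    rw [HankelAdd.K_fourierInv, HankelAdd.K_fourier]
    have e1 : -c - 2 * Real.pi * Complex.I * ((τ / (2 * Real.pi) : ℝ) : ℂ)
        = 1 / 4 - (σ + Complex.I * τ) := by
      rw [hc]; push_cast; field_simp; ring
    have e2 : -d + 2 * Real.pi * Complex.I * ((τ / (2 * Real.pi) : ℝ) : ℂ)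
        = 1 / 4 + (σ + Complex.I * τ) := by
      rw [hd]; push_cast; field_simp; ring
    rw [e1, e2, ← h1, ← h2, parD, parD, hzw, hzv]
    have e3 : -(2 * (σ + Complex.I * τ) - 1 / 2) / 2 = 1 / 4 - (σ + Complex.I * τ) := by ring
    have e4 : -(-2 * (σ + Complex.I * τ) - 1 / 2) / 2 = 1 / 4 + (σ + Complex.I * τ) := by ring
    have e5 : (2 : ℂ) ^ (-(1/2) : ℂ) = (2 : ℂ) ^ ((2 * (σ + Complex.I * τ) - 1 / 2) / 2) *
        (2 : ℂ) ^ ((-2 * (σ + Complex.I * τ) - 1 / 2) / 2) := by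
      rw [← Complex.cpow_add _ _ two_ne_zero]; congr 1; ring
    have e6 : Complex.exp (-(w + v) / 2) = Complex.exp (-(2 * w) / 4) * Complex.exp (-(2 * v) / 4) := by
      rw [← Complex.exp_add]; congr 1; ring
    rw [e3, e4, e5, e6, mul_div_cancel_left₀ w two_ne_zero, mul_div_cancel_left₀ v two_ne_zero]
    ring
  have hP := HankelAdd.parseval (HankelAdd.K_integrable hwre hcre 1) (HankelAdd.K_cont hwre hcre 1)
    (HankelAdd.K_fourier_integrable hwre hcre 1) (HankelAdd.K_integrable hvre hdre 1)
  have hcd : c + d = -1/2 := by rw [hc, hd]; ring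
  rw [HankelAdd.K_prod _ _ _ _ hcd,
    ← HankelAdd.gamma_hypU (a := 1/2) (by norm_num) 1 (w + v)] at hP
  simp_rw [hint]
  rw [MeasureTheory.integral_const_mul, MeasureTheory.Measure.integral_comp_div
    (fun k => 𝓕⁻ (HankelAdd.K w c 1) k * 𝓕 (HankelAdd.K v d 1) k), hP, hankelH02,
    Complex.Gamma_one_half_eq, abs_of_pos (by positivity), Complex.real_smul]
  have e7 : 2 * Complex.I * ((ξ ^ 2 + η ^ 2) / 2) = w + v := by rw [hw, hv]; ring
  have e8 : -Complex.I * ((ξ ^ 2 + η ^ 2) / 2) = -(w + v) / 2 := by rw [hw, hv]; ring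
  have e9 : (Real.pi : ℂ) ^ (1 / 2 : ℂ) = (Real.sqrt Real.pi : ℝ) := by
    rw [Real.sqrt_eq_rpow, Complex.ofReal_cpow Real.pi_pos.le]; norm_num
  have hsq : ((Real.sqrt Real.pi : ℝ) : ℂ) * (Real.sqrt Real.pi : ℝ) = Real.pi := by
    rw [← Complex.ofReal_mul, Real.mul_self_sqrt Real.pi_pos.le]
  have hs0 : ((Real.sqrt Real.pi : ℝ) : ℂ) ≠ 0 := by
    exact_mod_cast (Real.sqrt_pos.2 Real.pi_pos).ne'
  have e10 : (2 : ℂ) ^ (1 / 2 : ℂ) * (2 : ℂ) ^ (-(1 / 2) : ℂ) = 1 := by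
    rw [← Complex.cpow_add _ _ two_ne_zero]; simp
  rw [e7, e8, e9]
  push_cast
  generalize hypU (1 / 2) 1 (w + v) = u
  generalize Complex.exp (-(w + v) / 2) = ex
  rw [← hsq]
  generalize ((Real.sqrt Real.pi : ℝ) : ℂ) = r at *
  calc 2 * Complex.I / r * ex * u = ((2 : ℂ) ^ (1 / 2 : ℂ) * (2 : ℂ) ^ (-(1 / 2) : ℂ)) *
        (2 * Complex.I / r * ex * u) := by rw [e10, one_mul]
    _ = _ := by field_simp
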